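/- Let A ⊆ 2^ω be μ-measurable. For each n ∈ ℕ set A_{2n} = {s ∈ 2^{<ω} : μ(A ∩ U_s) > (1 − 2^{-2n})·2^{-|s|}}, and let A*_{2n} be the set of all elements of A_{2n} having no proper initial segment in A_{2n} (so A*_{2n} is an antichain and every element of A_{2n} has an initial segment in A*_{2n}). Suppose that for each n ∈ ℕ and each s ∈ A*_{2n} a μ-measurable set D^n_s ⊆ 2^ω is given with μ(D^n_s ∩ U_s) > (1 − 2^{-2n})·2^{-|s|}. Let B = ⋃_{n∈ℕ} ⋃_{s∈A*_{2n}} D^n_s. Then μ(A \ B) = 0. -/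

import Mathlib

open MeasureTheory
open scoped ENNReal

/-- The basic cylinder `U_s ⊆ 2^ω` determined by a finite binary string `s`:
the set of all `x : ℕ → Bool` having `s` as an initial segment. -/
def cylinder (s : List Bool) : Set (ℕ → Bool) :=
  {x | ∀ i : ℕ, ∀ h : i < s.length, x i = s.get ⟨i, h⟩}

/-- The set `A_m` of finite binary strings `s` on which the measurable set `A` has
relative measure greater than `1 - 2^{-m}`, i.e.
`μ (A ∩ U_s) > (1 - 2^{-m}) · 2^{-|s|}`. -/
def densityLevel (μ : Measure (ℕ → Bool)) (A : Set (ℕ → Bool)) (m : ℕ) :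
    Set (List Bool) :=
  {s | (1 - (1 / 2 : ℝ≥0∞) ^ m) * (1 / 2 : ℝ≥0∞) ^ s.length < μ (A ∩ cylinder s)}

/-- The set `A*_m` of minimal elements of `A_m`: those `s ∈ A_m` having no proper
initial segment in `A_m`.  It is an antichain, and every element of `A_m` has an
initial segment in `A*_m`. -/
def minimalDensityLevel (μ : Measure (ℕ → Bool)) (A : Set (ℕ → Bool)) (m : ℕ) :
    Set (List Bool) :=
  {s ∈ densityLevel μ A m | ∀ t : List Bool, t <+: s → t ≠ s → t ∉ densityLevel μ A m}

/-!
The engine is a weak form of the Lebesgue density theorem: if `E` occupies at most a proportion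
`c < 1` of every cylinder, then covering `E` by an open set `W` and splitting `W` into disjoint
cylinders gives `μ E ≤ c * μ W`; letting `W` shrink to `E` yields `μ E ≤ c * μ E`, so `μ E = 0`.
Applied to the part of `A` outside the cylinders in `A_m`, this shows that the antichain `A*_m`
covers `A` up to a null set. On each cylinder `U_s` with `s ∈ A*_m` the piece `D_s` misses at most
`2^{-m} * μ U_s`, so the union of the pieces misses at most measure `2^{-m}` of `A`; now vary `m`.
-/

section PrefixMinimals

variable {α : Type*} {P : Set (List α)} {s : List α}

/-- The elements of `P` that are minimal for the initial-segment order: `minimalDensityLevel` is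
the instance where `P` is a `densityLevel`. Mathlib's `Minimal` does not apply, since the order
on `List` is lexicographic. -/
def prefixMinimals (P : Set (List α)) : Set (List α) :=
  {s ∈ P | ∀ t : List α, t <+: s → t ≠ s → t ∉ P}

lemma isAntichain_prefixMinimals (P : Set (List α)) : IsAntichain (· <+: ·) (prefixMinimals P) :=
  fun s hs _ ht hne hst => ht.2 s hst hne hs.1

lemma exists_prefix_mem_prefixMinimals (hs : s ∈ P) : ∃ t ∈ prefixMinimals P, t <+: s := by
  obtain ⟨t, ⟨htP, hts⟩, hmin⟩ :=
    exists_minimalFor_of_wellFoundedLT (fun t => t ∈ P ∧ t <+: s) List.length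
      ⟨s, hs, List.prefix_rfl⟩
  refine ⟨t, ⟨htP, fun u hut hne huP => hne ?_⟩, hts⟩
  exact hut.eq_of_length_le (hmin ⟨huP, hut.trans hts⟩ hut.length_le)

end PrefixMinimals

section Cylinder

variable {s t : List Bool} {x : ℕ → Bool} {T : Set (List Bool)}

lemma cylinder_nil : cylinder [] = Set.univ :=
  Set.eq_univ_of_forall fun _ _ h => absurd h (Nat.not_lt_zero _)

lemma cylinder_subset_of_prefix (h : s <+: t) : cylinder t ⊆ cylinder s := by
  obtain ⟨hlen, heq⟩ := List.prefix_iff_getElem.1 h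
  exact fun x hx i hi => (hx i (hi.trans_le hlen)).trans (heq i hi).symm

lemma prefix_of_mem_cylinder (hs : x ∈ cylinder s) (ht : x ∈ cylinder t)
    (h : s.length ≤ t.length) : s <+: t :=
  List.prefix_iff_getElem.2 ⟨h, fun i hi => (hs i hi).symm.trans (ht i (hi.trans_le h))⟩

lemma pairwiseDisjoint_cylinder (hT : IsAntichain (· <+: ·) T) : T.PairwiseDisjoint cylinder := by
  refine fun s hs t ht hne => Set.disjoint_left.2 fun x hxs hxt => ?_
  rcases le_total s.length t.length with h | h
  · exact hT hs ht hne (prefix_of_mem_cylinder hxs hxt h)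
  · exact hT ht hs hne.symm (prefix_of_mem_cylinder hxt hxs h)

lemma biUnion_prefixMinimals_cylinder (P : Set (List Bool)) :
    ⋃ s ∈ prefixMinimals P, cylinder s = ⋃ s ∈ P, cylinder s := by
  refine (Set.biUnion_subset_biUnion_left fun s hs => hs.1).antisymm
    (Set.iUnion₂_subset fun s hs => ?_)
  obtain ⟨t, ht, hts⟩ := exists_prefix_mem_prefixMinimals hs
  exact (cylinder_subset_of_prefix hts).trans (Set.subset_biUnion_of_mem (u := cylinder) ht)

lemma cylinder_ofFn (x : ℕ → Bool) (n : ℕ) :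
    cylinder (List.ofFn fun i : Fin n => x i) = PiNat.cylinder (E := fun _ => Bool) x n := by
  ext y
  simp [_root_.cylinder, PiNat.cylinder]

lemma exists_mem_cylinder_subset_of_isOpen {W : Set (ℕ → Bool)} (hW : IsOpen W) (hx : x ∈ W) :
    ∃ s : List Bool, x ∈ cylinder s ∧ cylinder s ⊆ W := by
  obtain ⟨_, ⟨y, n, rfl⟩, hxy, hyW⟩ :=
    (PiNat.isTopologicalBasis_cylinders fun _ => Bool).exists_subset_of_mem_open hx hW
  rw [← cylinder_ofFn] at hxy hyW
  exact ⟨_, hxy, hyW⟩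

lemma biUnion_prefixMinimals_cylinder_eq_of_isOpen {W : Set (ℕ → Bool)} (hW : IsOpen W) :
    ⋃ s ∈ prefixMinimals {s | cylinder s ⊆ W}, cylinder s = W := by
  rw [biUnion_prefixMinimals_cylinder]
  refine Set.Subset.antisymm (Set.iUnion₂_subset fun s hs => hs) fun x hx => ?_
  obtain ⟨s, hxs, hsW⟩ := exists_mem_cylinder_subset_of_isOpen hW hx
  exact Set.mem_biUnion hsW hxs

lemma measurableSet_cylinder (s : List Bool) : MeasurableSet (cylinder s) := by
  simp only [_root_.cylinder, Set.ofPred_forall]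
  exact .iInter fun i => .iInter fun _ => measurable_pi_apply i (measurableSet_singleton _)

end Cylinder

lemma measure_sdiff_le_mul {α : Type*} [MeasurableSpace α] {μ : Measure α} {D U : Set α}
    {ε : ℝ≥0∞} (hD : NullMeasurableSet D μ) (hU : μ U ≠ ∞)
    (h : (1 - ε) * μ U ≤ μ (D ∩ U)) : μ (U \ D) ≤ ε * μ U := by
  have hfin : μ (D ∩ U) ≠ ∞ := measure_ne_top_of_subset Set.inter_subset_right hU
  refine ENNReal.le_of_add_le_add_left hfin ?_
  calc μ (D ∩ U) + μ (U \ D) = μ U := by rw [Set.inter_comm, measure_inter_add_sdiff₀ U hD]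
    _ ≤ ((1 - ε) + ε) * μ U := le_mul_of_one_le_left' le_tsub_add
    _ = (1 - ε) * μ U + ε * μ U := add_mul _ _ _
    _ ≤ μ (D ∩ U) + ε * μ U := by gcongr

section CantorMeasure

variable {μ : Measure (ℕ → Bool)} {A E : Set (ℕ → Bool)} {P T : Set (List Bool)} {c ε : ℝ≥0∞}

lemma measure_biUnion_le_mul_of_isAntichain (hT : IsAntichain (· <+: ·) T)
    {F : List Bool → Set (ℕ → Bool)} (hF : ∀ s ∈ T, μ (F s) ≤ c * μ (cylinder s)) :
    μ (⋃ s ∈ T, F s) ≤ c * μ (⋃ s ∈ T, cylinder s) :=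
  calc μ (⋃ s ∈ T, F s) ≤ ∑' s : T, μ (F s) := measure_biUnion_le μ T.to_countable F
    _ ≤ ∑' s : T, c * μ (cylinder s) := ENNReal.tsum_le_tsum fun s => hF s s.2
    _ = c * ∑' s : T, μ (cylinder s) := ENNReal.tsum_mul_left
    _ = c * μ (⋃ s ∈ T, cylinder s) := by
      rw [measure_biUnion T.to_countable (pairwiseDisjoint_cylinder hT)
        fun s _ => measurableSet_cylinder s]

lemma measure_le_mul_of_subset_isOpen (hE : ∀ s, μ (E ∩ cylinder s) ≤ c * μ (cylinder s))
    {W : Set (ℕ → Bool)} (hW : IsOpen W) (hEW : E ⊆ W) : μ E ≤ c * μ W := by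
  have hbound := measure_biUnion_le_mul_of_isAntichain
    (isAntichain_prefixMinimals {s | cylinder s ⊆ W}) fun s _ => hE s
  rwa [← Set.inter_iUnion₂, biUnion_prefixMinimals_cylinder_eq_of_isOpen hW,
    Set.inter_eq_left.2 hEW] at hbound

lemma measure_eq_zero_of_measure_inter_cylinder_le [μ.OuterRegular] (hμE : μ E ≠ ∞) (hc : c < 1)
    (hE : ∀ s, μ (E ∩ cylinder s) ≤ c * μ (cylinder s)) : μ E = 0 := by
  have hle : μ E ≤ c * μ E := by
    refine ENNReal.le_of_forall_pos_le_add fun ε hε _ => ?_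
    obtain ⟨W, hEW, hW, hWle⟩ := E.exists_isOpen_le_add μ (ENNReal.coe_ne_zero.2 hε.ne')
    calc μ E ≤ c * μ W := measure_le_mul_of_subset_isOpen hE hW hEW
      _ ≤ c * (μ E + ε) := by gcongr
      _ = c * μ E + c * ε := mul_add _ _ _
      _ ≤ c * μ E + ε := by gcongr; exact mul_le_of_le_one_left' hc.le
  by_contra hpos
  have hlt : c * μ E < 1 * μ E := ENNReal.mul_lt_mul_left hpos hμE hc
  exact hle.not_gt (by rwa [one_mul] at hlt)

lemma measure_sdiff_biUnion_cylinder_eq_zero [μ.OuterRegular] (hμA : μ A ≠ ∞) (hc : c < 1)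
    (hP : ∀ s ∉ P, μ (A ∩ cylinder s) ≤ c * μ (cylinder s)) :
    μ (A \ ⋃ s ∈ P, cylinder s) = 0 := by
  refine measure_eq_zero_of_measure_inter_cylinder_le
    (measure_ne_top_of_subset Set.sdiff_subset hμA) hc fun s => ?_
  by_cases hs : s ∈ P
  · have hdisj : Disjoint (A \ ⋃ s ∈ P, cylinder s) (cylinder s) :=
      Set.disjoint_sdiff_left.mono_right (Set.subset_biUnion_of_mem (u := cylinder) hs)
    simp [hdisj.inter_eq]
  · exact (measure_mono (Set.inter_subset_inter_left _ Set.sdiff_subset)).trans (hP s hs)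

lemma measure_sdiff_biUnion_prefixMinimals_le [IsFiniteMeasure μ] (hε : ε ≠ 0)
    (hP : ∀ s ∉ P, μ (A ∩ cylinder s) ≤ (1 - ε) * μ (cylinder s))
    {D : List Bool → Set (ℕ → Bool)} (hDmeas : ∀ s ∈ prefixMinimals P, NullMeasurableSet (D s) μ)
    (hD : ∀ s ∈ prefixMinimals P, (1 - ε) * μ (cylinder s) ≤ μ (D s ∩ cylinder s)) :
    μ (A \ ⋃ s ∈ prefixMinimals P, D s) ≤ ε * μ Set.univ := by
  set U := ⋃ s ∈ prefixMinimals P, cylinder s with hU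
  have hcover : μ (A \ U) = 0 := by
    rw [hU, biUnion_prefixMinimals_cylinder]
    exact measure_sdiff_biUnion_cylinder_eq_zero (measure_ne_top μ A)
      (ENNReal.sub_lt_self ENNReal.one_ne_top one_ne_zero hε) hP
  have hmissed : μ (⋃ s ∈ prefixMinimals P, cylinder s \ D s) ≤ ε * μ U :=
    measure_biUnion_le_mul_of_isAntichain (isAntichain_prefixMinimals P) fun s hs =>
      measure_sdiff_le_mul (hDmeas s hs) (measure_ne_top μ _) (hD s hs)
  have hsplit : A \ ⋃ s ∈ prefixMinimals P, D s ⊆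
      (A \ U) ∪ ⋃ s ∈ prefixMinimals P, cylinder s \ D s := by
    rintro x ⟨hxA, hxD⟩
    by_cases hxU : x ∈ U
    · obtain ⟨s, hs, hxs⟩ := Set.mem_iUnion₂.1 hxU
      exact .inr (Set.mem_biUnion hs ⟨hxs, fun hxDs => hxD (Set.mem_biUnion hs hxDs)⟩)
    · exact .inl ⟨hxA, hxU⟩
  calc μ (A \ ⋃ s ∈ prefixMinimals P, D s)
      ≤ μ ((A \ U) ∪ ⋃ s ∈ prefixMinimals P, cylinder s \ D s) := measure_mono hsplit
    _ ≤ μ (A \ U) + μ (⋃ s ∈ prefixMinimals P, cylinder s \ D s) := measure_union_le _ _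
    _ ≤ 0 + ε * μ U := add_le_add hcover.le hmissed
    _ ≤ ε * μ Set.univ := by
      rw [zero_add]
      gcongr
      exact Set.subset_univ U

lemma isProbabilityMeasure_of_measure_cylinder
    (hμ : ∀ s : List Bool, μ (cylinder s) = (1 / 2 : ℝ≥0∞) ^ s.length) :
    IsProbabilityMeasure μ :=
  ⟨by simpa only [cylinder_nil, List.length_nil, pow_zero] using hμ []⟩

lemma measure_sdiff_biUnion_minimalDensityLevel_le
    (hμ : ∀ s : List Bool, μ (cylinder s) = (1 / 2 : ℝ≥0∞) ^ s.length) (m : ℕ)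
    {D : List Bool → Set (ℕ → Bool)}
    (hDmeas : ∀ s ∈ minimalDensityLevel μ A m, NullMeasurableSet (D s) μ)
    (hD : ∀ s ∈ minimalDensityLevel μ A m,
      (1 - (1 / 2 : ℝ≥0∞) ^ m) * (1 / 2 : ℝ≥0∞) ^ s.length ≤ μ (D s ∩ cylinder s)) :
    μ (A \ ⋃ s ∈ minimalDensityLevel μ A m, D s) ≤ (1 / 2 : ℝ≥0∞) ^ m := by
  have := isProbabilityMeasure_of_measure_cylinder hμ
  have hlight : ∀ s ∉ densityLevel μ A m,
      μ (A ∩ cylinder s) ≤ (1 - (1 / 2 : ℝ≥0∞) ^ m) * μ (cylinder s) :=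
    fun s hs => hμ s ▸ not_lt.1 hs
  have hbound := measure_sdiff_biUnion_prefixMinimals_le (ε := (1 / 2 : ℝ≥0∞) ^ m)
    (pow_ne_zero m (by simp)) hlight hDmeas fun s hs => hμ s ▸ hD s hs
  rwa [measure_univ, mul_one] at hbound

end CantorMeasure

theorem measure_diff_union_null_of_dense_pieces_general
    {μ : Measure (ℕ → Bool)}
    (hμ : ∀ s : List Bool, μ (cylinder s) = (1 / 2 : ℝ≥0∞) ^ s.length)
    (A : Set (ℕ → Bool)) {ι : Type*} {m : ι → ℕ} (hm : ¬BddAbove (Set.range m))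
    {D : ι → List Bool → Set (ℕ → Bool)}
    (hDmeas : ∀ i, ∀ s ∈ minimalDensityLevel μ A (m i), NullMeasurableSet (D i s) μ)
    (hD : ∀ i, ∀ s ∈ minimalDensityLevel μ A (m i),
      (1 - (1 / 2 : ℝ≥0∞) ^ m i) * (1 / 2 : ℝ≥0∞) ^ s.length ≤ μ (D i s ∩ cylinder s)) :
    μ (A \ ⋃ i, ⋃ s ∈ minimalDensityLevel μ A (m i), D i s) = 0 := by
  have hlim : Filter.Tendsto (fun k : ℕ => (1 / 2 : ℝ≥0∞) ^ k) Filter.atTop (nhds 0) :=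
    ENNReal.tendsto_pow_atTop_nhds_zero_of_lt_one (by simp)
  refine le_antisymm (ge_of_tendsto' hlim fun k => ?_) zero_le
  obtain ⟨_, ⟨i, rfl⟩, hki⟩ := not_bddAbove_iff.1 hm k
  calc μ (A \ ⋃ i, ⋃ s ∈ minimalDensityLevel μ A (m i), D i s)
      ≤ μ (A \ ⋃ s ∈ minimalDensityLevel μ A (m i), D i s) :=
        measure_mono (Set.sdiff_subset_sdiff_right (Set.subset_iUnion_of_subset i subset_rfl))
    _ ≤ (1 / 2 : ℝ≥0∞) ^ m i :=
        measure_sdiff_biUnion_minimalDensityLevel_le hμ (m i) (hDmeas i) (hD i)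
    _ ≤ (1 / 2 : ℝ≥0∞) ^ k := pow_le_pow_right_of_le_one' (by simp) hki.le

/-- Let `A ⊆ 2^ω` be `μ`-measurable (with `μ` the fair-coin measure).
For each `n` let `A_{2n}` be the strings of relative `A`-measure `> 1 - 2^{-2n}` and
`A*_{2n}` the set of its minimal elements.  If for each `n` and each `s ∈ A*_{2n}` a
`μ`-measurable set `D^n_s` is given with `μ (D^n_s ∩ U_s) > (1 - 2^{-2n}) · 2^{-|s|}`,
then `B = ⋃_n ⋃_{s ∈ A*_{2n}} D^n_s` satisfies `μ (A \ B) = 0`. -/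
theorem measure_diff_union_null_of_dense_pieces
    (μ : Measure (ℕ → Bool)) [IsProbabilityMeasure μ]
    (hμ : ∀ s : List Bool, μ (cylinder s) = (1 / 2 : ℝ≥0∞) ^ s.length)
    (A : Set (ℕ → Bool)) (hA : NullMeasurableSet A μ)
    (D : ℕ → List Bool → Set (ℕ → Bool))
    (hDmeas : ∀ (n : ℕ) (s : List Bool), NullMeasurableSet (D n s) μ)
    (hD : ∀ (n : ℕ), ∀ s ∈ minimalDensityLevel μ A (2 * n),
      (1 - (1 / 2 : ℝ≥0∞) ^ (2 * n)) * (1 / 2 : ℝ≥0∞) ^ s.length < μ (D n s ∩ cylinder s)) :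
    μ (A \ ⋃ n : ℕ, ⋃ s ∈ minimalDensityLevel μ A (2 * n), D n s) = 0 :=
  measure_diff_union_null_of_dense_pieces_general hμ A
    (StrictMono.not_bddAbove_range_of_wellFoundedLT (strictMono_mul_left_of_pos two_pos))
    (fun n s _ => hDmeas n s) fun n s hs => (hD n s hs).le
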